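/- (Slowest 1-periodic trajectory.) Let 𝒜 and ℬ be n×n matrices over the extended reals ℝ̄, let μ be a real number, and let x(0) ∈ ℝ̄^n be a min-plus eigenvector of ℬ, i.e. ℬ ⊗' x(0) = μ + x(0) (entrywise). Then the trajectory x(k) = ℬ^{k'} ⊗' x(0) (min-plus powers) satisfies the lower-bound constraints 𝒜 ⊗ x(k-1) ≤ x(k) for all k ≥ 1 if and only if (ℬ^♯ ⊗ 𝒜)* ⊗ x(0) = x(0) (i.e. x(0) lies in the image of (ℬ^♯ ⊗ 𝒜)*). -/

import Mathlib

/-!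
Write `M = ℬ^♯ ⊗ 𝒜`. The eigenvector equation propagates along the trajectory: `x(k) = kμ + x(0)`,
because both products commute with translation by a real scalar. Hence every constraint
`𝒜 ⊗ x(k-1) ≤ x(k)` is a translate of the first one, `𝒜 ⊗ x(0) ≤ x(1)`. By residuation
(`add_le_iff_le_mnAdd`, which holds on all of `EReal` thanks to the two conventions for `∞ - ∞`)
that constraint says `M ⊗ x(0) ≤ x(0)`, and a vector is a subsolution of `M` exactly when the
Kleene star of `M` fixes it (`mpStar_fix_iff`).

The residuation is a Galois connection, so it also supplies the distributivity of `+` over suprema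
and of `mnAdd` over infima, hence the associativity of the matrix products.
-/

noncomputable section

/-- Max-plus matrix product over the extended reals (`-∞` is absorbing for `+` in `EReal`). -/
def mpMul {m n p : ℕ} (A : Matrix (Fin m) (Fin n) EReal) (B : Matrix (Fin n) (Fin p) EReal) :
    Matrix (Fin m) (Fin p) EReal :=
  fun i j => ⨆ k, A i k + B k j

/-- Max-plus matrix-vector product. -/
def mpMulVec {m n : ℕ} (A : Matrix (Fin m) (Fin n) EReal) (x : Fin n → EReal) :
    Fin m → EReal :=
  fun i => ⨆ k, A i k + x k

/-- Min-plus addition on `EReal`: `+∞` is absorbing. -/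
def mnAdd (a b : EReal) : EReal := -((-a) + (-b))

/-- Min-plus matrix product. -/
def mnMul {m n p : ℕ} (A : Matrix (Fin m) (Fin n) EReal) (B : Matrix (Fin n) (Fin p) EReal) :
    Matrix (Fin m) (Fin p) EReal :=
  fun i j => ⨅ k, mnAdd (A i k) (B k j)

/-- Min-plus matrix-vector product. -/
def mnMulVec {m n : ℕ} (A : Matrix (Fin m) (Fin n) EReal) (x : Fin n → EReal) :
    Fin m → EReal :=
  fun i => ⨅ k, mnAdd (A i k) (x k)

/-- Conjugate matrix: `(conj A) i j = -(A j i)`. -/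
def conjM {m n : ℕ} (A : Matrix (Fin m) (Fin n) EReal) : Matrix (Fin n) (Fin m) EReal :=
  fun i j => -(A j i)

/-- Max-plus identity matrix. -/
def mpId (n : ℕ) : Matrix (Fin n) (Fin n) EReal :=
  fun i j => if i = j then 0 else ⊥

/-- Min-plus identity matrix. -/
def mnId (n : ℕ) : Matrix (Fin n) (Fin n) EReal :=
  fun i j => if i = j then 0 else ⊤

/-- Max-plus matrix powers. -/
def mpPow {n : ℕ} (A : Matrix (Fin n) (Fin n) EReal) : ℕ → Matrix (Fin n) (Fin n) EReal
  | 0 => mpId n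
  | k + 1 => mpMul A (mpPow A k)

/-- Min-plus matrix powers. -/
def mnPow {n : ℕ} (A : Matrix (Fin n) (Fin n) EReal) : ℕ → Matrix (Fin n) (Fin n) EReal
  | 0 => mnId n
  | k + 1 => mnMul A (mnPow A k)

/-- Max-plus Kleene star: entrywise supremum of all max-plus powers. -/
def mpStar {n : ℕ} (A : Matrix (Fin n) (Fin n) EReal) : Matrix (Fin n) (Fin n) EReal :=
  fun i j => ⨆ k, mpPow A k i j

/-- Min-plus star: entrywise infimum of all min-plus powers. -/
def mnStar {n : ℕ} (A : Matrix (Fin n) (Fin n) EReal) : Matrix (Fin n) (Fin n) EReal :=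
  fun i j => ⨅ k, mnPow A k i j

/-- Entrywise maximum of two matrices (`A ⊕ B`). -/
def mSup {m n : ℕ} (A B : Matrix (Fin m) (Fin n) EReal) : Matrix (Fin m) (Fin n) EReal :=
  fun i j => A i j ⊔ B i j
/-- Residuation: max-plus translation by `a` is left adjoint to min-plus translation by `-a`.
The asymmetric conventions for `∞ - ∞` make this hold for infinite `a` as well. -/
lemma add_le_iff_le_mnAdd (a y c : EReal) : a + y ≤ c ↔ y ≤ mnAdd (-a) c := by
  unfold mnAdd
  induction a <;> induction y <;> induction c <;>
    first
      | (simp; done)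
      | (norm_cast; constructor <;> intro h <;> linarith)

lemma gc_add (a : EReal) : GaloisConnection (fun y => a + y) (fun c => mnAdd (-a) c) :=
  fun y c => add_le_iff_le_mnAdd a y c

lemma mp_add_iSup {ι : Sort*} (a : EReal) (f : ι → EReal) : a + ⨆ k, f k = ⨆ k, a + f k :=
  (gc_add a).l_iSup

lemma mp_iSup_add {ι : Sort*} (a : EReal) (f : ι → EReal) : (⨆ k, f k) + a = ⨆ k, f k + a := by
  rw [add_comm, mp_add_iSup]
  simp only [add_comm]

lemma mnAdd_iInf {ι : Sort*} (a : EReal) (f : ι → EReal) :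
    mnAdd a (⨅ k, f k) = ⨅ k, mnAdd a (f k) := by
  have h := (gc_add (-a)).u_iInf (f := f)
  simpa only [neg_neg] using h

lemma mnAdd_comm (a b : EReal) : mnAdd a b = mnAdd b a := by
  simp only [mnAdd, add_comm]

lemma mnAdd_assoc (a b c : EReal) : mnAdd (mnAdd a b) c = mnAdd a (mnAdd b c) := by
  simp only [mnAdd, neg_neg, add_assoc]

lemma iInf_mnAdd {ι : Sort*} (a : EReal) (f : ι → EReal) :
    mnAdd (⨅ k, f k) a = ⨅ k, mnAdd (f k) a := by
  rw [mnAdd_comm, mnAdd_iInf]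
  simp only [mnAdd_comm a]

lemma mnAdd_coe (c : ℝ) (a : EReal) : mnAdd c a = c + a := by
  unfold mnAdd
  rw [EReal.neg_add (by simp) (by simp), neg_neg, sub_eq_add_neg, neg_neg]

lemma mpMulVec_mpMul {m n p : ℕ} (A : Matrix (Fin m) (Fin n) EReal)
    (B : Matrix (Fin n) (Fin p) EReal) (x : Fin p → EReal) :
    mpMulVec (mpMul A B) x = mpMulVec A (mpMulVec B x) := by
  funext i
  simp only [mpMulVec, mpMul, mp_iSup_add, mp_add_iSup, add_assoc]
  exact iSup_comm

lemma mnMulVec_mnMul {m n p : ℕ} (A : Matrix (Fin m) (Fin n) EReal)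
    (B : Matrix (Fin n) (Fin p) EReal) (x : Fin p → EReal) :
    mnMulVec (mnMul A B) x = mnMulVec A (mnMulVec B x) := by
  funext i
  simp only [mnMulVec, mnMul, iInf_mnAdd, mnAdd_iInf, mnAdd_assoc]
  exact iInf_comm

lemma mpMulVec_mpId {n : ℕ} (x : Fin n → EReal) : mpMulVec (mpId n) x = x := by
  funext i
  refine le_antisymm (iSup_le fun k => ?_) (le_iSup_of_le i (by simp [mpId]))
  by_cases h : i = k
  · simp [mpId, h]
  · simp [mpId, h]

lemma mnMulVec_mnId {n : ℕ} (x : Fin n → EReal) : mnMulVec (mnId n) x = x := by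
  funext i
  refine le_antisymm (iInf_le_of_le i (by simp [mnId, mnAdd])) (le_iInf fun k => ?_)
  by_cases h : i = k
  · simp [mnId, mnAdd, h]
  · simp [mnId, mnAdd, h]

lemma mpMulVec_mono {m n : ℕ} (A : Matrix (Fin m) (Fin n) EReal) {x y : Fin n → EReal}
    (h : x ≤ y) : mpMulVec A x ≤ mpMulVec A y :=
  fun _ => iSup_mono fun k => add_le_add le_rfl (h k)

lemma mpMulVec_translate {m n : ℕ} (A : Matrix (Fin m) (Fin n) EReal) (c : EReal)
    (x : Fin n → EReal) : mpMulVec A (fun i => c + x i) = fun i => c + mpMulVec A x i := by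
  funext i
  simp only [mpMulVec, mp_add_iSup, add_left_comm]

lemma mnMulVec_translate {m n : ℕ} (B : Matrix (Fin m) (Fin n) EReal) (c : ℝ)
    (x : Fin n → EReal) : mnMulVec B (fun i => c + x i) = fun i => c + mnMulVec B x i := by
  funext i
  simp only [mnMulVec, ← mnAdd_coe, mnAdd_iInf]
  refine iInf_congr fun k => ?_
  rw [← mnAdd_assoc, mnAdd_comm _ (c : EReal), mnAdd_assoc]

/-- Matrix form of residuation. -/
lemma mpMulVec_conjM_le_iff {m n : ℕ} (B : Matrix (Fin m) (Fin n) EReal) (y : Fin m → EReal)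
    (x : Fin n → EReal) : mpMulVec (conjM B) y ≤ x ↔ y ≤ mnMulVec B x := by
  simp only [Pi.le_def, mpMulVec, mnMulVec, conjM, iSup_le_iff, le_iInf_iff,
    add_le_iff_le_mnAdd, neg_neg]
  exact forall_comm

/-- The vectors fixed by the Kleene star of `M` are the subsolutions of `M`. -/
lemma mpStar_fix_iff {n : ℕ} (M : Matrix (Fin n) (Fin n) EReal) (x : Fin n → EReal) :
    mpMulVec (mpStar M) x = x ↔ mpMulVec M x ≤ x := by
  have hstar : ∀ i, mpMulVec (mpStar M) x i = ⨆ k, mpMulVec (mpPow M k) x i := by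
    intro i
    simp only [mpMulVec, mpStar, mp_iSup_add]
    exact iSup_comm
  constructor
  · intro h i
    have h1 : mpMulVec (mpPow M 1) x i ≤ mpMulVec (mpStar M) x i := by
      rw [hstar]
      exact le_iSup (fun k => mpMulVec (mpPow M k) x i) 1
    rwa [h, mpPow, mpMulVec_mpMul, mpPow, mpMulVec_mpId] at h1
  · intro h
    have hk : ∀ k, mpMulVec (mpPow M k) x ≤ x := by
      intro k
      induction k with
      | zero => rw [mpPow, mpMulVec_mpId]
      | succ k ih =>
        rw [mpPow, mpMulVec_mpMul]
        exact (mpMulVec_mono M ih).trans h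
    funext i
    rw [hstar]
    refine le_antisymm (iSup_le fun k => hk k i) (le_iSup_of_le 0 ?_)
    rw [mpPow, mpMulVec_mpId]

/-- The trajectory issued from a min-plus eigenvector is 1-periodic with rate `mu`. -/
lemma mnMulVec_mnPow_eigen {n : ℕ} (B : Matrix (Fin n) (Fin n) EReal) (mu : ℝ)
    (x : Fin n → EReal) (h : mnMulVec B x = fun i => (mu : EReal) + x i) (k : ℕ) :
    mnMulVec (mnPow B k) x = fun i => ((k * mu : ℝ) : EReal) + x i := by
  induction k with
  | zero => simp [mnPow, mnMulVec_mnId]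
  | succ k ih =>
    rw [mnPow, mnMulVec_mnMul, ih, mnMulVec_translate, h]
    funext i
    rw [← add_assoc, ← EReal.coe_add]
    congr 2
    push_cast
    ring

/-- slowest 1-periodic trajectory. -/
theorem slowest_one_periodic {n : ℕ} (𝒜 ℬ : Matrix (Fin n) (Fin n) EReal)
    (mu : ℝ) (x0 : Fin n → EReal)
    (heig : mnMulVec ℬ x0 = fun i => (mu : EReal) + x0 i) :
    (∀ k : ℕ, 1 ≤ k →
        mpMulVec 𝒜 (mnMulVec (mnPow ℬ (k - 1)) x0) ≤ mnMulVec (mnPow ℬ k) x0) ↔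
      mpMulVec (mpStar (mpMul (conjM ℬ) 𝒜)) x0 = x0 := by
  rw [mpStar_fix_iff, mpMulVec_mpMul, mpMulVec_conjM_le_iff]
  constructor
  · intro h
    have h1 := h 1 le_rfl
    rwa [Nat.sub_self, mnPow, mnMulVec_mnId, mnPow, mnMulVec_mnMul, mnPow, mnMulVec_mnId] at h1
  · intro h k hk
    obtain ⟨j, rfl⟩ : ∃ j, k = j + 1 := ⟨k - 1, by omega⟩
    -- `x(j+1)` is written as the translate of `x(1)` by `j * mu`.
    rw [Nat.add_sub_cancel, mnMulVec_mnPow_eigen ℬ mu x0 heig j, mpMulVec_translate, mnPow,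
      mnMulVec_mnMul, mnMulVec_mnPow_eigen ℬ mu x0 heig j, mnMulVec_translate]
    exact fun i => add_le_add le_rfl (h i)
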